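/- Let D ⊂ ℝ² be the unit disc and let v ∈ W^{1,1}(D) satisfy ∫_D ∇v · ∇ψ = 0 for all ψ ∈ C¹(closure of D) (distributional Neumann problem with f = 0). Then the symmetric reflection v̂(x) = v(x) for x ∈ D, v̂(x) = v(x/|x|²) for x ∉ D is harmonic on ℝ² and hence v is constant. -/

import Mathlib

open MeasureTheory Metric Complex Classical

/-- The Laplacian of `ψ : ℂ → ℝ`, with `ℂ ≅ ℝ²` (basis `1, i`). -/
noncomputable def lap (ψ : ℂ → ℝ) (x : ℂ) : ℝ :=
  fderiv ℝ (fun y => fderiv ℝ ψ y 1) x 1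
    + fderiv ℝ (fun y => fderiv ℝ ψ y Complex.I) x Complex.I

/-- The symmetric reflection `v̂` of `v` across the unit circle:
`v̂(x) = v(x)` on `D`, `v̂(x) = v(x*)` with `x* = x/|x|² = (conj x)⁻¹` outside. -/
noncomputable def symReflect (v : ℂ → ℝ) (x : ℂ) : ℝ :=
  if x ∈ ball (0 : ℂ) 1 then v x else v ((starRingEnd ℂ) x)⁻¹

/-!
Green's formula `∫ v div X = -∫ V · X` on `{ρ > 0}` requires no boundary values of `v` when `X` is
tangential to the boundary in the sense that `∇ρ · X = O(ρ)`. A weak Neumann solution therefore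
satisfies `∫ v Δψ = 0` for every `ψ` whose normal derivative vanishes on the boundary. On the disc,
`z^a conj(z)^b` and `z^(a+j) conj(z)^(b+j)` agree on the circle and have proportional normal
derivatives there, so a combination of them is such a `ψ`, and its Laplacian relates two moments
`∫ v z^p conj(z)^q` of `v`. For `v` of mean zero this relation, started at `a = 0`, at `b = 0` and
at `a = b = 1`, makes all moments vanish, so `v = 0` by Stone–Weierstrass. In general `v` and with
it `v̂` are constant almost everywhere.
-/

open scoped InnerProductSpace Laplacian Gradient Topology

section SmoothTransition

lemma deriv_smoothTransition_of_neg {t : ℝ} (ht : t < 0) : deriv Real.smoothTransition t = 0 := by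
  have h : Real.smoothTransition =ᶠ[𝓝 t] fun _ => 0 := by
    filter_upwards [gt_mem_nhds ht] with s hs using Real.smoothTransition.zero_of_nonpos hs.le
  rw [h.deriv_eq, deriv_const]

lemma deriv_smoothTransition_of_one_lt {t : ℝ} (ht : 1 < t) :
    deriv Real.smoothTransition t = 0 := by
  have h : Real.smoothTransition =ᶠ[𝓝 t] fun _ => 1 := by
    filter_upwards [lt_mem_nhds ht] with s hs using Real.smoothTransition.one_of_one_le hs.le
  rw [h.deriv_eq, deriv_const]

lemma continuous_deriv_smoothTransition : Continuous (deriv Real.smoothTransition) :=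
  (Real.smoothTransition.contDiff (n := 1)).continuous_deriv (by simp)

lemma hasCompactSupport_deriv_smoothTransition :
    HasCompactSupport (deriv Real.smoothTransition) := by
  refine .intro (isCompact_Icc (a := (0 : ℝ)) (b := 1)) fun t ht => ?_
  rcases not_and_or.1 ht with h | h
  · exact deriv_smoothTransition_of_neg (not_le.1 h)
  · exact deriv_smoothTransition_of_one_lt (not_le.1 h)

lemma exists_abs_mul_deriv_smoothTransition_sub_one_le :
    ∃ M : ℝ, ∀ t : ℝ, |t * deriv Real.smoothTransition (t - 1)| ≤ M := by
  have hsupp : HasCompactSupport fun t => (t + 1) * deriv Real.smoothTransition t :=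
    hasCompactSupport_deriv_smoothTransition.mul_left
  obtain ⟨M, hM⟩ := hsupp.exists_bound_of_continuous
    ((continuous_add_const 1).mul continuous_deriv_smoothTransition)
  exact ⟨M, fun t => by simpa using hM (t - 1)⟩

end SmoothTransition

section Superlevel

/-- The cutoff with parameter `t` of the superlevel set `{x | 0 < ρ x}`: it vanishes where
`t * ρ ≤ 1` and equals `1` where `2 ≤ t * ρ`. -/
noncomputable def superlevelCutoff {α : Type*} (ρ : α → ℝ) (t : ℝ) (x : α) : ℝ :=
  Real.smoothTransition (t * ρ x - 1)

lemma abs_superlevelCutoff_le_one {α : Type*} (ρ : α → ℝ) (t : ℝ) (x : α) :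
    |superlevelCutoff ρ t x| ≤ 1 := by
  rw [superlevelCutoff, abs_of_nonneg (Real.smoothTransition.nonneg _)]
  exact Real.smoothTransition.le_one _

lemma superlevelCutoff_eq_one {α : Type*} {ρ : α → ℝ} {t : ℝ} {x : α} (h : 2 < t * ρ x) :
    superlevelCutoff ρ t x = 1 :=
  Real.smoothTransition.one_of_one_le (by linarith)

lemma eventually_two_lt_natCast_mul {r : ℝ} (hr : 0 < r) : ∀ᶠ n : ℕ in Filter.atTop, 2 < n * r :=
  (tendsto_natCast_atTop_atTop.atTop_mul_const hr).eventually_gt_atTop 2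

lemma tsupport_superlevelCutoff_smul_subset {α F : Type*} [TopologicalSpace α] [Zero F]
    [SMulWithZero ℝ F] {ρ : α → ℝ} (hρ : Continuous ρ) (t : ℝ) (X : α → F) :
    tsupport (fun x => superlevelCutoff ρ t x • X x) ⊆ {x | 1 ≤ t * ρ x} := by
  refine closure_minimal (fun x hx => ?_) (isClosed_le continuous_const (hρ.const_mul t))
  by_contra h
  have h0 : superlevelCutoff ρ t x = 0 :=
    Real.smoothTransition.zero_of_nonpos (sub_nonpos.2 (not_le.1 h).le)
  exact hx (by simp only [h0, zero_smul])

lemma tsupport_superlevelCutoff_smul_subset_superlevel {α F : Type*} [TopologicalSpace α] [Zero F]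
    [SMulWithZero ℝ F] {ρ : α → ℝ} (hρ : Continuous ρ) {t : ℝ} (ht : 0 ≤ t) (X : α → F) :
    tsupport (fun x => superlevelCutoff ρ t x • X x) ⊆ {x | 0 < ρ x} := by
  intro x hx
  have h : 1 ≤ t * ρ x := tsupport_superlevelCutoff_smul_subset hρ t X hx
  exact pos_of_mul_pos_right (zero_lt_one.trans_le h) ht

lemma hasCompactSupport_superlevelCutoff_smul {α F : Type*} [PseudoMetricSpace α] [ProperSpace α]
    [Zero F] [SMulWithZero ℝ F] {ρ : α → ℝ} (hρ : Continuous ρ)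
    (hΩ : Bornology.IsBounded {x | 0 < ρ x}) {t : ℝ} (ht : 0 ≤ t) (X : α → F) :
    HasCompactSupport fun x => superlevelCutoff ρ t x • X x :=
  Metric.isCompact_of_isClosed_isBounded (isClosed_tsupport _)
    (hΩ.subset (tsupport_superlevelCutoff_smul_subset_superlevel hρ ht X))

variable {E : Type*} [NormedAddCommGroup E] [NormedSpace ℝ E] {ρ : E → ℝ}

lemma contDiff_superlevelCutoff (hρ : ContDiff ℝ 1 ρ) (t : ℝ) :
    ContDiff ℝ 1 (superlevelCutoff ρ t) :=
  (Real.smoothTransition.contDiff (n := 1)).comp ((contDiff_const.mul hρ).sub contDiff_const)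

lemma fderiv_superlevelCutoff_apply (hρ : Differentiable ℝ ρ) (t : ℝ) (x h : E) :
    fderiv ℝ (superlevelCutoff ρ t) x h =
      deriv Real.smoothTransition (t * ρ x - 1) * (t * fderiv ℝ ρ x h) := by
  have hS : HasDerivAt Real.smoothTransition (deriv Real.smoothTransition (t * ρ x - 1))
      (t * ρ x - 1) :=
    ((Real.smoothTransition.contDiff (n := 1)).differentiable (by simp) _).hasDerivAt
  have hχ : HasFDerivAt (superlevelCutoff ρ t) _ x :=
    hS.comp_hasFDerivAt x (((hρ x).hasFDerivAt.const_mul t).sub_const 1)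
  rw [hχ.fderiv]
  rfl

lemma fderiv_superlevelCutoff_eq_zero (hρ : Differentiable ℝ ρ) {t : ℝ} {x : E}
    (h : 2 < t * ρ x) : fderiv ℝ (superlevelCutoff ρ t) x = 0 := by
  ext y
  rw [fderiv_superlevelCutoff_apply hρ, deriv_smoothTransition_of_one_lt (by linarith)]
  simp

lemma exists_abs_fderiv_superlevelCutoff_le (hρ : Differentiable ℝ ρ) {X : E → E} {K : ℝ}
    (hK : ∀ x, 0 < ρ x → |fderiv ℝ ρ x (X x)| ≤ K * ρ x) :
    ∃ C : ℝ, ∀ t, 0 ≤ t → ∀ x, 0 < ρ x → |fderiv ℝ (superlevelCutoff ρ t) x (X x)| ≤ C := by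
  obtain ⟨M, hM⟩ := exists_abs_mul_deriv_smoothTransition_sub_one_le
  refine ⟨K * M, fun t ht x hx => ?_⟩
  have hK0 : 0 ≤ K := nonneg_of_mul_nonneg_left ((abs_nonneg _).trans (hK x hx)) hx
  calc |fderiv ℝ (superlevelCutoff ρ t) x (X x)|
      = |deriv Real.smoothTransition (t * ρ x - 1)| * (t * |fderiv ℝ ρ x (X x)|) := by
        rw [fderiv_superlevelCutoff_apply hρ, abs_mul, abs_mul, abs_of_nonneg ht]
    _ ≤ |deriv Real.smoothTransition (t * ρ x - 1)| * (t * (K * ρ x)) := by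
        gcongr
        exact hK x hx
    _ = K * |t * ρ x * deriv Real.smoothTransition (t * ρ x - 1)| := by
        rw [abs_mul, abs_of_nonneg (mul_nonneg ht hx.le)]
        ring
    _ ≤ K * M := by
        gcongr
        exact hM _

end Superlevel

section Divergence

variable {E : Type*} [NormedAddCommGroup E] [InnerProductSpace ℝ E]

/-- The divergence of a vector field, as the trace of its derivative. -/
noncomputable def divergence (X : E → E) (x : E) : ℝ :=
  LinearMap.trace ℝ E (fderiv ℝ X x).toLinearMap

lemma divergence_eq_sum_inner {ι : Type*} [Fintype ι] (b : OrthonormalBasis ι ℝ E) (X : E → E)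
    (x : E) : divergence X x = ∑ i, ⟪b i, fderiv ℝ X x (b i)⟫_ℝ :=
  LinearMap.trace_eq_sum_inner _ b

lemma contDiff_gradient [CompleteSpace E] {ψ : E → ℝ} (hψ : ContDiff ℝ 2 ψ) : ContDiff ℝ 1 (∇ ψ) :=
  (InnerProductSpace.toDual ℝ E).symm.contDiff.comp (hψ.fderiv_right (m := 1) (by norm_num))

variable [FiniteDimensional ℝ E]

lemma continuous_divergence {X : E → E} (hX : ContDiff ℝ 1 X) : Continuous (divergence X) := by
  have h : ∀ y, Continuous fun x => fderiv ℝ X x y :=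
    fun y => (hX.continuous_fderiv (by simp)).clm_apply continuous_const
  simp only [funext (divergence_eq_sum_inner (stdOrthonormalBasis ℝ E) X)]
  exact continuous_finsetSum _ fun i _ => continuous_const.inner (h _)

lemma divergence_smul {χ : E → ℝ} {X : E → E} (hχ : Differentiable ℝ χ) (hX : Differentiable ℝ X)
    (x : E) :
    divergence (fun y => χ y • X y) x = χ x * divergence X x + fderiv ℝ χ x (X x) := by
  have htrace : LinearMap.trace ℝ E ((fderiv ℝ χ x).smulRight (X x)).toLinearMap =
      fderiv ℝ χ x (X x) := LinearMap.trace_smulRight (fderiv ℝ χ x).toLinearMap (X x)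
  rw [divergence, fderiv_fun_smul (hχ x) (hX x)]
  simp only [ContinuousLinearMap.toLinearMap_add, ContinuousLinearMap.toLinearMap_smul, map_add,
    map_smul, smul_eq_mul, htrace, divergence]

lemma divergence_gradient {ψ : E → ℝ} (hψ : ContDiff ℝ 2 ψ) (x : E) :
    divergence (∇ ψ) x = Δ ψ x := by
  have hd : DifferentiableAt ℝ (fderiv ℝ ψ) x :=
    (hψ.fderiv_right (m := 1) (by norm_num)).differentiable (by simp) x
  have hgrad : ∀ h, fderiv ℝ (∇ ψ) x h =
      (InnerProductSpace.toDual ℝ E).symm (fderiv ℝ (fderiv ℝ ψ) x h) := fun h => by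
    have := ((InnerProductSpace.toDual ℝ E).symm.toContinuousLinearEquiv.hasFDerivAt.comp x
      hd.hasFDerivAt).fderiv
    exact DFunLike.congr_fun this h
  rw [divergence_eq_sum_inner (stdOrthonormalBasis ℝ E),
    InnerProductSpace.laplacian_eq_iteratedFDeriv_stdOrthonormalBasis]
  refine Finset.sum_congr rfl fun i _ => ?_
  rw [hgrad, real_inner_comm, InnerProductSpace.toDual_symm_apply, iteratedFDeriv_two_apply]
  rfl

lemma continuous_laplacian {G : Type*} [NormedAddCommGroup G] [NormedSpace ℝ G] {F : E → G}
    (hF : ContDiff ℝ 2 F) : Continuous (Δ F) := by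
  have h : ∀ y, Continuous fun x => iteratedFDeriv ℝ 2 F x ![y, y] := fun y =>
    (hF.continuous_iteratedFDeriv le_rfl).eval_const _
  rw [InnerProductSpace.laplacian_eq_iteratedFDeriv_stdOrthonormalBasis]
  exact continuous_finsetSum _ fun i _ => h _

end Divergence

lemma tendsto_integral_mul_of_bounded {α : Type*} [MeasurableSpace α] {μ : Measure α}
    {f g : α → ℝ} {G : ℕ → α → ℝ} {C : ℝ} (hf : Integrable f μ)
    (hG : ∀ n, AEStronglyMeasurable (G n) μ) (hC : ∀ n, ∀ᵐ x ∂μ, |G n x| ≤ C)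
    (hlim : ∀ᵐ x ∂μ, Filter.Tendsto (fun n => G n x) Filter.atTop (𝓝 (g x))) :
    Filter.Tendsto (fun n => ∫ x, f x * G n x ∂μ) Filter.atTop (𝓝 (∫ x, f x * g x ∂μ)) := by
  refine tendsto_integral_of_dominated_convergence (fun x => ‖f x‖ * C)
    (fun n => hf.aestronglyMeasurable.mul (hG n)) (hf.norm.mul_const C) (fun n => ?_) ?_
  · filter_upwards [hC n] with x hx
    rw [norm_mul]
    exact mul_le_mul_of_nonneg_left hx (norm_nonneg _)
  · filter_upwards [hlim] with x hx using hx.const_mul (f x)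

lemma integrable_mul_of_hasCompactSupport {α : Type*} [MetricSpace α] [MeasurableSpace α]
    [BorelSpace α] {μ : Measure α} {f g : α → ℝ} (hf : Integrable f μ) (hg : Continuous g)
    (hc : HasCompactSupport g) : Integrable (fun x => f x * g x) μ := by
  simpa only [smul_eq_mul, mul_comm] using
    hf.locallyIntegrable.integrable_smul_left_of_hasCompactSupport hg hc

lemma integral_fderiv_apply_eq_zero {E : Type*} [NormedAddCommGroup E] [NormedSpace ℝ E]
    [FiniteDimensional ℝ E] [MeasurableSpace E] [BorelSpace E] {μ : Measure E} [μ.IsAddHaarMeasure]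
    {φ : E → ℝ} (hφ : ContDiff ℝ 1 φ) (hc : HasCompactSupport φ) (h : E) :
    ∫ x, fderiv ℝ φ x h ∂μ = 0 := by
  have hint : Integrable (fun x => fderiv ℝ φ x h) μ :=
    ((hφ.continuous_fderiv (by simp)).clm_apply continuous_const).integrable_of_hasCompactSupport
      (hc.fderiv_apply ℝ h)
  simpa using integral_mul_fderiv_eq_neg_fderiv_mul_of_integrable (μ := μ)
    (f := fun _ => (1 : ℝ)) (g := φ) (v := h) (by simp) (by simpa using hint)
    (by simpa using hφ.continuous.integrable_of_hasCompactSupport hc)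
    (fun x _ => differentiableAt_const _) (fun x _ => hφ.differentiable (by simp) x)

section WeakGradient

variable {E : Type*} [NormedAddCommGroup E] [InnerProductSpace ℝ E] [MeasurableSpace E]

/-- `V` is a weak gradient of `v` on `Ω`: integration by parts holds, in every direction, against
`C¹` functions with compact support in `Ω`. -/
def IsWeakGradientOn (v : E → ℝ) (V : E → E) (Ω : Set E) (μ : Measure E) : Prop :=
  ∀ φ : E → ℝ, ContDiff ℝ 1 φ → HasCompactSupport φ → tsupport φ ⊆ Ω → ∀ h : E,
    ∫ x in Ω, v x * fderiv ℝ φ x h ∂μ = -∫ x in Ω, ⟪V x, h⟫_ℝ * φ x ∂μ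

/-- The field `V` is a weak solution on `Ω` of the homogeneous Neumann problem `div V = 0`,
`V · n = 0`: it is orthogonal to the gradient of every function that is `C¹` up to the boundary. -/
def IsWeakNeumannOn (V : E → E) (Ω : Set E) (μ : Measure E) : Prop :=
  ∀ ψ : E → ℝ, ContDiff ℝ 1 ψ → ∫ x in Ω, fderiv ℝ ψ x (V x) ∂μ = 0

variable [BorelSpace E] {v : E → ℝ} {V : E → E} {Ω : Set E} {μ : Measure E}

lemma IsWeakGradientOn.sub_const [FiniteDimensional ℝ E] [μ.IsAddHaarMeasure]
    (hgrad : IsWeakGradientOn v V Ω μ) (hv : IntegrableOn v Ω μ) (c : ℝ) :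
    IsWeakGradientOn (fun x => v x - c) V Ω μ := by
  intro φ hφ hc hs h
  have hcont : Continuous fun x => fderiv ℝ φ x h :=
    (hφ.continuous_fderiv (by simp)).clm_apply continuous_const
  have hint : Integrable (fun x => fderiv ℝ φ x h) μ :=
    hcont.integrable_of_hasCompactSupport (hc.fderiv_apply ℝ h)
  have hzero : ∫ x in Ω, fderiv ℝ φ x h ∂μ = 0 := by
    rw [setIntegral_eq_integral_of_forall_compl_eq_zero, integral_fderiv_apply_eq_zero hφ hc]
    intro x hx
    rw [fderiv_of_notMem_tsupport ℝ fun hx' => hx (hs hx'), zero_apply]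
  rw [← hgrad φ hφ hc hs h]
  simp only [sub_mul]
  rw [integral_sub (integrable_mul_of_hasCompactSupport hv hcont (hc.fderiv_apply ℝ h))
    (hint.integrableOn.const_mul c),
    integral_const_mul, hzero, mul_zero, sub_zero]

lemma IsWeakGradientOn.integral_mul_divergence_of_hasCompactSupport [FiniteDimensional ℝ E]
    (hgrad : IsWeakGradientOn v V Ω μ) (hv : IntegrableOn v Ω μ) (hV : IntegrableOn V Ω μ)
    {X : E → E} (hX : ContDiff ℝ 1 X) (hc : HasCompactSupport X) (hs : tsupport X ⊆ Ω) :
    ∫ x in Ω, v x * divergence X x ∂μ = -∫ x in Ω, ⟪V x, X x⟫_ℝ ∂μ := by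
  let b := stdOrthonormalBasis ℝ E
  have hφ : ∀ i, ContDiff ℝ 1 fun x => ⟪b i, X x⟫_ℝ := fun i => contDiff_const.inner ℝ hX
  have hφs : ∀ i, tsupport (fun x => ⟪b i, X x⟫_ℝ) ⊆ tsupport X := fun i =>
    closure_mono fun x hx hx' => hx (by simp only [hx', inner_zero_right])
  have hφc : ∀ i, HasCompactSupport fun x => ⟪b i, X x⟫_ℝ := fun i =>
    hc.of_isClosed_subset (isClosed_tsupport _) (hφs i)
  have hdiv : ∀ x, divergence X x = ∑ i, fderiv ℝ (fun y => ⟪b i, X y⟫_ℝ) x (b i) := fun x => by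
    rw [divergence_eq_sum_inner b]
    refine Finset.sum_congr rfl fun i _ => ?_
    rw [fderiv_inner_apply ℝ (differentiableAt_const _) (hX.differentiable (by simp) x)]
    simp
  have hint : ∀ i, IntegrableOn (fun x => v x * fderiv ℝ (fun y => ⟪b i, X y⟫_ℝ) x (b i)) Ω μ :=
    fun i => integrable_mul_of_hasCompactSupport hv
      (((hφ i).continuous_fderiv (by simp)).clm_apply continuous_const)
      ((hφc i).fderiv_apply ℝ (b i))
  have hint' : ∀ i, IntegrableOn (fun x => ⟪V x, b i⟫_ℝ * ⟪b i, X x⟫_ℝ) Ω μ := fun i =>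
    integrable_mul_of_hasCompactSupport (Integrable.inner_const (𝕜 := ℝ) hV (b i))
      (hφ i).continuous (hφc i)
  calc ∫ x in Ω, v x * divergence X x ∂μ
      = ∑ i, ∫ x in Ω, v x * fderiv ℝ (fun y => ⟪b i, X y⟫_ℝ) x (b i) ∂μ := by
        simp only [hdiv, Finset.mul_sum]
        exact integral_finsetSum _ fun i _ => hint i
    _ = -∑ i, ∫ x in Ω, ⟪V x, b i⟫_ℝ * ⟪b i, X x⟫_ℝ ∂μ := by
        rw [← Finset.sum_neg_distrib]
        exact Finset.sum_congr rfl fun i _ => hgrad _ (hφ i) (hφc i) ((hφs i).trans hs) (b i)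
    _ = -∫ x in Ω, ⟪V x, X x⟫_ℝ ∂μ := by
        rw [← integral_finsetSum _ fun i _ => hint' i]
        simp only [b.sum_inner_mul_inner]

end WeakGradient

section Tangential

variable {E : Type*} [NormedAddCommGroup E] [InnerProductSpace ℝ E] [FiniteDimensional ℝ E]
  {X : E → E} {ρ : E → ℝ} {K : ℝ}

lemma exists_abs_divergence_superlevelCutoff_smul_le (hρ : ContDiff ℝ 1 ρ)
    (hΩ : Bornology.IsBounded {x | 0 < ρ x}) (hX : ContDiff ℝ 1 X)
    (hK : ∀ x, 0 < ρ x → |fderiv ℝ ρ x (X x)| ≤ K * ρ x) :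
    ∃ C : ℝ, ∀ t, 0 ≤ t → ∀ x, 0 < ρ x →
      |divergence (fun y => superlevelCutoff ρ t y • X y) x| ≤ C := by
  obtain ⟨C₁, hC₁⟩ := hΩ.isCompact_closure.exists_bound_of_continuousOn
    (continuous_divergence hX).continuousOn
  obtain ⟨C₂, hC₂⟩ := exists_abs_fderiv_superlevelCutoff_le (hρ.differentiable (by simp)) hK
  refine ⟨C₁ + C₂, fun t ht x hx => ?_⟩
  rw [divergence_smul ((contDiff_superlevelCutoff hρ t).differentiable (by simp))
    (hX.differentiable (by simp))]
  calc |superlevelCutoff ρ t x * divergence X x + fderiv ℝ (superlevelCutoff ρ t) x (X x)|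
      ≤ |superlevelCutoff ρ t x| * |divergence X x| +
          |fderiv ℝ (superlevelCutoff ρ t) x (X x)| := by
        rw [← abs_mul]
        exact abs_add_le _ _
    _ ≤ 1 * C₁ + C₂ := by
        gcongr
        · exact abs_superlevelCutoff_le_one ρ t x
        · exact hC₁ x (subset_closure hx)
        · exact hC₂ t ht x hx
    _ = C₁ + C₂ := by rw [one_mul]

lemma divergence_superlevelCutoff_smul_eq (hρ : ContDiff ℝ 1 ρ) (hX : Differentiable ℝ X) {t : ℝ}
    {x : E} (h : 2 < t * ρ x) :
    divergence (fun y => superlevelCutoff ρ t y • X y) x = divergence X x := by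
  rw [divergence_smul ((contDiff_superlevelCutoff hρ t).differentiable (by simp)) hX,
    superlevelCutoff_eq_one h, fderiv_superlevelCutoff_eq_zero (hρ.differentiable (by simp)) h,
    one_mul, zero_apply, add_zero]

variable [MeasurableSpace E] [BorelSpace E] {μ : Measure E} {v : E → ℝ} {V : E → E}

lemma integrableOn_inner_of_continuous {Ω : Set E} (hV : IntegrableOn V Ω μ)
    (hΩ : Bornology.IsBounded Ω) (hΩm : MeasurableSet Ω) (hX : Continuous X) :
    IntegrableOn (fun x => ⟪V x, X x⟫_ℝ) Ω μ := by
  obtain ⟨C, hC⟩ := hΩ.isCompact_closure.exists_bound_of_continuousOn hX.continuousOn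
  refine (hV.norm.mul_const C).mono' (hV.aestronglyMeasurable.inner hX.aestronglyMeasurable) ?_
  filter_upwards [ae_restrict_mem hΩm] with x hx
  exact (norm_inner_le_norm _ _).trans
    (mul_le_mul_of_nonneg_left (hC x (subset_closure hx)) (norm_nonneg _))

/- Cut `X` off by `superlevelCutoff ρ n`: the error term `v * ∇(cutoff) · X` stays bounded by a
multiple of `|v|`, precisely because `∇ρ · X = O(ρ)`, and it tends to `0` pointwise. -/
theorem IsWeakGradientOn.integral_mul_divergence_of_tangential
    (hgrad : IsWeakGradientOn v V {x | 0 < ρ x} μ) (hv : IntegrableOn v {x | 0 < ρ x} μ)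
    (hV : IntegrableOn V {x | 0 < ρ x} μ) (hρ : ContDiff ℝ 1 ρ)
    (hΩ : Bornology.IsBounded {x | 0 < ρ x}) (hX : ContDiff ℝ 1 X)
    (hK : ∀ x, 0 < ρ x → |fderiv ℝ ρ x (X x)| ≤ K * ρ x) :
    ∫ x in {x | 0 < ρ x}, v x * divergence X x ∂μ = -∫ x in {x | 0 < ρ x}, ⟪V x, X x⟫_ℝ ∂μ := by
  have hΩm : MeasurableSet {x | 0 < ρ x} := (isOpen_lt continuous_const hρ.continuous).measurableSet
  have hcut : ∀ n : ℕ, ContDiff ℝ 1 (superlevelCutoff ρ n) := fun n =>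
    contDiff_superlevelCutoff hρ n
  have hcutX : ∀ n : ℕ, ContDiff ℝ 1 fun x => superlevelCutoff ρ n x • X x :=
    fun n => (hcut n).smul hX
  obtain ⟨C, hC⟩ := exists_abs_divergence_superlevelCutoff_smul_le hρ hΩ hX hK
  have hdiv := tendsto_integral_mul_of_bounded hv (g := divergence X) (C := C)
    (fun n : ℕ => (continuous_divergence (hcutX n)).aestronglyMeasurable)
    (fun n => (ae_restrict_mem hΩm).mono fun x hx => hC n n.cast_nonneg x hx)
    ((ae_restrict_mem hΩm).mono fun x hx => tendsto_const_nhds.congr' <|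
      (eventually_two_lt_natCast_mul hx).mono fun n hn =>
        (divergence_superlevelCutoff_smul_eq hρ (hX.differentiable (by simp)) hn).symm)
  have hflux := tendsto_integral_mul_of_bounded
    (integrableOn_inner_of_continuous hV hΩ hΩm hX.continuous) (g := fun _ => 1) (C := 1)
    (fun n : ℕ => (hcut n).continuous.aestronglyMeasurable)
    (fun n => .of_forall fun x => abs_superlevelCutoff_le_one ρ n x)
    ((ae_restrict_mem hΩm).mono fun x hx => tendsto_const_nhds.congr' <|
      (eventually_two_lt_natCast_mul hx).mono fun n hn => (superlevelCutoff_eq_one hn).symm)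
  simp only [mul_one] at hflux
  refine tendsto_nhds_unique hdiv (hflux.neg.congr fun n => ?_)
  rw [hgrad.integral_mul_divergence_of_hasCompactSupport hv hV (hcutX n)
    (hasCompactSupport_superlevelCutoff_smul hρ.continuous hΩ n.cast_nonneg X)
    (tsupport_superlevelCutoff_smul_subset_superlevel hρ.continuous n.cast_nonneg X)]
  simp only [real_inner_smul_right, mul_comm]

theorem IsWeakGradientOn.integral_mul_laplacian_eq_zero
    (hgrad : IsWeakGradientOn v V {x | 0 < ρ x} μ) (hneu : IsWeakNeumannOn V {x | 0 < ρ x} μ)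
    (hv : IntegrableOn v {x | 0 < ρ x} μ) (hV : IntegrableOn V {x | 0 < ρ x} μ)
    (hρ : ContDiff ℝ 1 ρ) (hΩ : Bornology.IsBounded {x | 0 < ρ x}) {ψ : E → ℝ}
    (hψ : ContDiff ℝ 2 ψ) (hK : ∀ x, 0 < ρ x → |fderiv ℝ ψ x (∇ ρ x)| ≤ K * ρ x) :
    ∫ x in {x | 0 < ρ x}, v x * Δ ψ x ∂μ = 0 := by
  have htan : ∀ x, 0 < ρ x → |fderiv ℝ ρ x (∇ ψ x)| ≤ K * ρ x := fun x hx => by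
    rw [← inner_gradient_left, inner_gradient_right]
    simpa using hK x hx
  have hgreen := hgrad.integral_mul_divergence_of_tangential hv hV hρ hΩ (contDiff_gradient hψ) htan
  simp only [divergence_gradient hψ, inner_gradient_right] at hgreen
  simpa [hneu ψ (hψ.of_le one_le_two)] using hgreen

theorem IsWeakGradientOn.integral_smul_laplacian_eq_zero {G : Type*} [NormedAddCommGroup G]
    [NormedSpace ℝ G] [CompleteSpace G] (hgrad : IsWeakGradientOn v V {x | 0 < ρ x} μ)
    (hneu : IsWeakNeumannOn V {x | 0 < ρ x} μ) (hv : IntegrableOn v {x | 0 < ρ x} μ)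
    (hV : IntegrableOn V {x | 0 < ρ x} μ) (hρ : ContDiff ℝ 1 ρ)
    (hΩ : Bornology.IsBounded {x | 0 < ρ x}) {F : E → G} (hF : ContDiff ℝ 2 F)
    (hK : ∀ x, 0 < ρ x → ‖fderiv ℝ F x (∇ ρ x)‖ ≤ K * ρ x) :
    ∫ x in {x | 0 < ρ x}, v x • Δ F x ∂μ = 0 := by
  have hΩm : MeasurableSet {x | 0 < ρ x} := (isOpen_lt continuous_const hρ.continuous).measurableSet
  have hint : IntegrableOn (fun x => v x • Δ F x) {x | 0 < ρ x} μ := by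
    obtain ⟨C, hC⟩ := hΩ.isCompact_closure.exists_bound_of_continuousOn
      (continuous_laplacian hF).continuousOn
    exact Integrable.smul_bdd hv C (continuous_laplacian hF).aestronglyMeasurable
      ((ae_restrict_mem hΩm).mono fun x hx => hC x (subset_closure hx))
  refine (SeparatingDual.eq_zero_iff_forall_dual_eq_zero (R := ℝ) _).2 fun ℓ => ?_
  rw [← ℓ.integral_comp_comm hint]
  have hlap : ∀ x, ℓ (v x • Δ F x) = v x * Δ (ℓ ∘ F) x := fun x => by
    rw [map_smul, smul_eq_mul, hF.contDiffAt.laplacian_CLM_comp_left, Function.comp_apply]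
  simp only [hlap]
  refine hgrad.integral_mul_laplacian_eq_zero (K := ‖ℓ‖ * K) hneu hv hV hρ hΩ
    (ℓ.contDiff.comp hF) fun x hx => ?_
  rw [fderiv_comp x ℓ.differentiableAt (hF.differentiable (by simp) x), ℓ.fderiv, mul_assoc]
  exact (ℓ.le_opNorm _).trans (mul_le_mul_of_nonneg_left (hK x hx) (norm_nonneg _))

end Tangential

section Ball

lemma ball_zero_one_eq_setOf_norm_sq_pos {E : Type*} [SeminormedAddCommGroup E] :
    ball (0 : E) 1 = {x | 0 < 1 - ‖x‖ ^ 2} := by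
  ext x
  rw [mem_ball_zero_iff, Set.mem_ofPred_eq, sub_pos, sq_lt_one_iff₀ (norm_nonneg x)]

variable {E : Type*} [NormedAddCommGroup E] [InnerProductSpace ℝ E]

lemma gradient_one_sub_norm_sq [CompleteSpace E] (x : E) :
    ∇ (fun y : E => 1 - ‖y‖ ^ 2) x = -((2 : ℝ) • x) := by
  refine ext_inner_right ℝ fun y => ?_
  rw [inner_gradient_left, ((hasStrictFDerivAt_norm_sq x).hasFDerivAt.const_sub 1).fderiv]
  simp [inner_smul_left]

theorem IsWeakGradientOn.integral_ball_smul_laplacian_eq_zero [FiniteDimensional ℝ E]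
    [MeasurableSpace E] [BorelSpace E] {μ : Measure E} {v : E → ℝ} {V : E → E}
    {G : Type*} [NormedAddCommGroup G] [NormedSpace ℝ G] [CompleteSpace G]
    (hgrad : IsWeakGradientOn v V (ball 0 1) μ) (hneu : IsWeakNeumannOn V (ball 0 1) μ)
    (hv : IntegrableOn v (ball 0 1) μ) (hV : IntegrableOn V (ball 0 1) μ) {F : E → G}
    (hF : ContDiff ℝ 2 F) {K : ℝ}
    (hK : ∀ x ∈ ball (0 : E) 1, ‖fderiv ℝ F x x‖ ≤ K * (1 - ‖x‖ ^ 2)) :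
    ∫ x in ball 0 1, v x • Δ F x ∂μ = 0 := by
  have hΩ : Bornology.IsBounded (ball (0 : E) 1) := isBounded_ball
  simp only [ball_zero_one_eq_setOf_norm_sq_pos] at hgrad hneu hv hV hΩ hK ⊢
  refine hgrad.integral_smul_laplacian_eq_zero (K := 2 * K) hneu hv hV
    (contDiff_const.sub (contDiff_norm_sq ℝ)) hΩ hF fun x hx => ?_
  rw [gradient_one_sub_norm_sq, map_neg, map_smul, norm_neg, norm_smul, Real.norm_two, mul_assoc]
  exact mul_le_mul_of_nonneg_left (hK x hx) zero_le_two

end Ball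

section Moments

lemma iteratedFDeriv_two_apply_self {E F : Type*} [NormedAddCommGroup E] [NormedSpace ℝ E]
    [NormedAddCommGroup F] [NormedSpace ℝ F] {f : E → F} (hf : ContDiff ℝ 2 f) (x h : E) :
    iteratedFDeriv ℝ 2 f x ![h, h] = fderiv ℝ (fun y => fderiv ℝ f y h) x h := by
  have hd : DifferentiableAt ℝ (fderiv ℝ f) x :=
    (hf.fderiv_right (m := 1) (by norm_num)).differentiable (by simp) x
  rw [iteratedFDeriv_two_apply, fderiv_clm_apply hd (differentiableAt_const h)]
  simp

/-- The monomial `z ^ a * conj z ^ b`, as a function on `ℂ`. -/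
noncomputable def conjMonomial (a b : ℕ) (z : ℂ) : ℂ := z ^ a * starRingEnd ℂ z ^ b

lemma contDiff_conjMonomial {n : WithTop ℕ∞} (a b : ℕ) : ContDiff ℝ n (conjMonomial a b) :=
  (contDiff_id.pow a).mul (conjCLE.contDiff.pow b)

lemma contDiff_const_smul_conjMonomial {n : WithTop ℕ∞} (c : ℂ) (a b : ℕ) :
    ContDiff ℝ n (c • conjMonomial a b) :=
  (contDiff_conjMonomial a b).const_smul c

lemma differentiable_conjMonomial (a b : ℕ) : Differentiable ℝ (conjMonomial a b) :=
  (contDiff_conjMonomial (n := 1) a b).differentiable (by simp)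

lemma fderiv_conjMonomial (a b : ℕ) (z h : ℂ) :
    fderiv ℝ (conjMonomial a b) z h =
      a * h * conjMonomial (a - 1) b z + b * starRingEnd ℂ h * conjMonomial a (b - 1) z := by
  have hz : HasFDerivAt (fun w : ℂ => w ^ a * starRingEnd ℂ w ^ b) _ z :=
    ((hasFDerivAt_id (𝕜 := ℝ) z).pow a).mul (conjCLE.hasFDerivAt.pow b)
  rw [show conjMonomial a b = fun w : ℂ => w ^ a * starRingEnd ℂ w ^ b from rfl, hz.fderiv]
  simp only [conjMonomial, id_eq, ContinuousAlgEquiv.coeCLE_apply, conjCAE_apply, nsmul_eq_mul,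
    add_apply, smul_apply, ContinuousLinearEquiv.coe_coe, smul_eq_mul, ContinuousLinearMap.id_apply]
  ring

lemma fderiv_conjMonomial_self (a b : ℕ) (z : ℂ) :
    fderiv ℝ (conjMonomial a b) z z = (a + b) * conjMonomial a b z := by
  have hpow : ∀ (n : ℕ) (w : ℂ), n * (w * w ^ (n - 1)) = n * w ^ n := fun n w => by
    cases n with
    | zero => simp
    | succ n => rw [Nat.add_sub_cancel, pow_succ']
  rw [fderiv_conjMonomial]
  simp only [conjMonomial]
  linear_combination starRingEnd ℂ z ^ b * hpow a z + z ^ a * hpow b (starRingEnd ℂ z)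

lemma laplacian_conjMonomial (a b : ℕ) (z : ℂ) :
    Δ (conjMonomial a b) z = (4 * a * b) * conjMonomial (a - 1) (b - 1) z := by
  have hsnd : ∀ h : ℂ, fderiv ℝ (fun w => fderiv ℝ (conjMonomial a b) w h) z h =
      a * h * fderiv ℝ (conjMonomial (a - 1) b) z h +
        b * starRingEnd ℂ h * fderiv ℝ (conjMonomial a (b - 1)) z h := fun h => by
    have hfst : (fun w => fderiv ℝ (conjMonomial a b) w h) =
        (a * h) • conjMonomial (a - 1) b + (b * starRingEnd ℂ h) • conjMonomial a (b - 1) :=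
      funext fun w => fderiv_conjMonomial a b w h
    rw [hfst, fderiv_add ((differentiable_conjMonomial _ _ z).const_smul _)
      ((differentiable_conjMonomial _ _ z).const_smul _),
      fderiv_const_smul (differentiable_conjMonomial _ _ z),
      fderiv_const_smul (differentiable_conjMonomial _ _ z)]
    rfl
  rw [InnerProductSpace.laplacian_eq_iteratedFDeriv_complexPlane]
  simp only [iteratedFDeriv_two_apply_self (contDiff_conjMonomial a b), hsnd]
  simp only [fderiv_conjMonomial, map_one, conj_I]
  linear_combination (a * (a - 1 : ℕ) * conjMonomial (a - 1 - 1) b z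
    + b * (b - 1 : ℕ) * conjMonomial a (b - 1 - 1) z
    - 2 * a * b * conjMonomial (a - 1) (b - 1) z) * I_sq

lemma conjMonomial_add (a b j : ℕ) (z : ℂ) :
    conjMonomial (a + j) (b + j) z = ((‖z‖ ^ 2) ^ j : ℝ) * conjMonomial a b z := by
  have h : ((‖z‖ ^ 2) ^ j : ℝ) = (z * starRingEnd ℂ z) ^ j := by
    rw [mul_conj']
    push_cast
    rfl
  rw [h, conjMonomial, conjMonomial]
  ring

lemma norm_conjMonomial_le_one {z : ℂ} (hz : ‖z‖ ≤ 1) (a b : ℕ) : ‖conjMonomial a b z‖ ≤ 1 := by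
  rw [conjMonomial, norm_mul, norm_pow, norm_pow, RCLike.norm_conj, ← pow_add]
  exact pow_le_one₀ (norm_nonneg z) hz

lemma abs_pow_sub_one_le {t : ℝ} (h0 : 0 ≤ t) (h1 : t ≤ 1) (j : ℕ) :
    |t ^ j - 1| ≤ j * (1 - t) := by
  rw [abs_sub_comm, abs_of_nonneg (sub_nonneg.2 (pow_le_one₀ h0 h1))]
  linarith [one_add_mul_sub_le_pow (by linarith : -1 ≤ t) j]

/-- The combination of `conjMonomial (a + j) (b + j)` and `conjMonomial a b` whose radial derivative
vanishes on the unit circle. -/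
noncomputable def neumannMonomial (a b j : ℕ) : ℂ → ℂ :=
  (a + b : ℂ) • conjMonomial (a + j) (b + j) - (a + b + 2 * j : ℂ) • conjMonomial a b

lemma contDiff_neumannMonomial {n : WithTop ℕ∞} (a b j : ℕ) :
    ContDiff ℝ n (neumannMonomial a b j) :=
  (contDiff_const_smul_conjMonomial _ _ _).sub (contDiff_const_smul_conjMonomial _ _ _)

lemma fderiv_neumannMonomial_self (a b j : ℕ) (z : ℂ) :
    fderiv ℝ (neumannMonomial a b j) z z =
      (a + b) * (a + b + 2 * j) * ((‖z‖ ^ 2) ^ j - 1 : ℝ) * conjMonomial a b z := by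
  rw [neumannMonomial, fderiv_sub ((differentiable_conjMonomial _ _ z).const_smul _)
    ((differentiable_conjMonomial _ _ z).const_smul _),
    fderiv_const_smul (differentiable_conjMonomial _ _ z),
    fderiv_const_smul (differentiable_conjMonomial _ _ z)]
  simp only [sub_apply, smul_apply, fderiv_conjMonomial_self, conjMonomial_add, smul_eq_mul]
  push_cast
  ring

lemma norm_fderiv_neumannMonomial_self_le (a b j : ℕ) {z : ℂ} (hz : ‖z‖ ≤ 1) :
    ‖fderiv ℝ (neumannMonomial a b j) z z‖ ≤
      (a + b) * (a + b + 2 * j) * j * (1 - ‖z‖ ^ 2) := by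
  have hc : ‖((a + b) * (a + b + 2 * j) : ℂ)‖ = (a + b) * (a + b + 2 * j) := by
    exact_mod_cast Complex.norm_natCast ((a + b) * (a + b + 2 * j))
  have hbern : |(‖z‖ ^ 2) ^ j - 1| ≤ j * (1 - ‖z‖ ^ 2) :=
    abs_pow_sub_one_le (sq_nonneg _) (pow_le_one₀ (norm_nonneg z) hz) j
  rw [fderiv_neumannMonomial_self, norm_mul, norm_mul, hc, norm_real, Real.norm_eq_abs]
  calc ((a + b) * (a + b + 2 * j) : ℝ) * |(‖z‖ ^ 2) ^ j - 1| * ‖conjMonomial a b z‖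
      ≤ (a + b) * (a + b + 2 * j) * (j * (1 - ‖z‖ ^ 2)) * 1 := by
        gcongr
        · exact mul_nonneg (by positivity) ((abs_nonneg _).trans hbern)
        · exact norm_conjMonomial_le_one hz a b
    _ = (a + b) * (a + b + 2 * j) * j * (1 - ‖z‖ ^ 2) := by ring

lemma laplacian_neumannMonomial (a b j : ℕ) (z : ℂ) :
    Δ (neumannMonomial a b j) z =
      (a + b) * (4 * (a + j) * (b + j)) * conjMonomial (a + j - 1) (b + j - 1) z -
        (a + b + 2 * j) * (4 * a * b) * conjMonomial (a - 1) (b - 1) z := by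
  rw [neumannMonomial,
    (contDiff_const_smul_conjMonomial _ _ _).contDiffAt.laplacian_sub
      (contDiff_const_smul_conjMonomial _ _ _).contDiffAt,
    InnerProductSpace.laplacian_smul _ (contDiff_conjMonomial _ _).contDiffAt,
    InnerProductSpace.laplacian_smul _ (contDiff_conjMonomial _ _).contDiffAt]
  simp only [laplacian_conjMonomial, smul_eq_mul]
  push_cast
  ring

variable {v : ℂ → ℝ} {V : ℂ → ℂ}

lemma integrableOn_ball_smul_conjMonomial (hv : IntegrableOn v (ball 0 1)) (a b : ℕ) :
    IntegrableOn (fun z => v z • conjMonomial a b z) (ball 0 1) :=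
  Integrable.smul_bdd hv 1 (differentiable_conjMonomial a b).continuous.aestronglyMeasurable <|
    (ae_restrict_mem measurableSet_ball).mono fun _ hz =>
      norm_conjMonomial_le_one (mem_ball_zero_iff.1 hz).le a b

lemma IsWeakGradientOn.moment_recursion (hgrad : IsWeakGradientOn v V (ball 0 1) volume)
    (hneu : IsWeakNeumannOn V (ball 0 1) volume) (hv : IntegrableOn v (ball 0 1))
    (hV : IntegrableOn V (ball 0 1)) (a b j : ℕ) :
    ((a + b) * (a + j) * (b + j) : ℂ) *
        ∫ z in ball 0 1, v z • conjMonomial (a + j - 1) (b + j - 1) z =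
      (a + b + 2 * j) * a * b * ∫ z in ball 0 1, v z • conjMonomial (a - 1) (b - 1) z := by
  have hzero := hgrad.integral_ball_smul_laplacian_eq_zero hneu hv hV
    (contDiff_neumannMonomial a b j) fun z hz =>
      norm_fderiv_neumannMonomial_self_le a b j (mem_ball_zero_iff.1 hz).le
  have hlap : ∀ z, v z • Δ (neumannMonomial a b j) z =
      ((a + b) * (4 * (a + j) * (b + j)) : ℂ) *
          (v z • conjMonomial (a + j - 1) (b + j - 1) z) -
        (a + b + 2 * j) * (4 * a * b) * (v z • conjMonomial (a - 1) (b - 1) z) := fun z => by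
    rw [laplacian_neumannMonomial, smul_sub, mul_smul_comm, mul_smul_comm]
  simp only [hlap] at hzero
  rw [integral_sub ((integrableOn_ball_smul_conjMonomial hv _ _).const_mul _)
    ((integrableOn_ball_smul_conjMonomial hv _ _).const_mul _), integral_const_mul,
    integral_const_mul] at hzero
  linear_combination hzero / 4

theorem IsWeakGradientOn.integral_smul_conjMonomial_eq_zero
    (hgrad : IsWeakGradientOn v V (ball 0 1) volume)
    (hneu : IsWeakNeumannOn V (ball 0 1) volume) (hv : IntegrableOn v (ball 0 1))
    (hV : IntegrableOn V (ball 0 1)) (hmean : ∫ z in ball 0 1, v z = 0) (p q : ℕ) :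
    ∫ z in ball 0 1, v z • conjMonomial p q z = 0 := by
  have hmean' : ∫ z in ball 0 1, v z • conjMonomial 0 0 z = 0 := by
    simpa [conjMonomial, integral_complex_ofReal] using hmean
  have hstep : ∀ a b j : ℕ, 0 < a + b → 0 < j →
      (a * b * ∫ z in ball 0 1, v z • conjMonomial (a - 1) (b - 1) z : ℂ) = 0 →
      ∫ z in ball 0 1, v z • conjMonomial (a + j - 1) (b + j - 1) z = 0 := fun a b j hab hj h => by
    have hcoeff : ((a + b) * (a + j) * (b + j) : ℂ) ≠ 0 := by
      exact_mod_cast (by positivity : (a + b) * (a + j) * (b + j) ≠ 0)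
    refine (mul_eq_zero.1 ?_).resolve_left hcoeff
    rw [hgrad.moment_recursion hneu hv hV, mul_assoc, mul_assoc, ← mul_assoc (a : ℂ), h, mul_zero]
  rcases lt_trichotomy p q with hpq | rfl | hpq
  · have h := hstep 0 (q - p) (p + 1) (by omega) p.succ_pos (by simp)
    rwa [zero_add, show q - p + (p + 1) - 1 = q by omega] at h
  · rcases p.eq_zero_or_pos with rfl | hp
    · exact hmean'
    · have h := hstep 1 1 p two_pos hp (by rw [hmean', mul_zero])
      rwa [Nat.add_sub_cancel_left] at h
  · have h := hstep (p - q) 0 (q + 1) (by omega) q.succ_pos (by simp)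
    rwa [zero_add, show p - q + (q + 1) - 1 = p by omega] at h

end Moments

section Density

/-- The functional `g ↦ ∫ g * f ∂μ` on the continuous functions on a compact space, for an
integrable weight `f`. -/
noncomputable def integralMulCLM {X 𝕜 : Type*} [TopologicalSpace X] [CompactSpace X]
    [MeasurableSpace X] [OpensMeasurableSpace X] [RCLike 𝕜] {μ : Measure X} {f : X → 𝕜}
    (hf : Integrable f μ) : C(X, 𝕜) →L[𝕜] 𝕜 :=
  have hint : ∀ g : C(X, 𝕜), Integrable (fun x => g x * f x) μ := fun g =>
    hf.bdd_mul g.continuous.aestronglyMeasurable (.of_forall g.norm_coe_le_norm)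
  LinearMap.mkContinuous
    { toFun := fun g => ∫ x, g x * f x ∂μ
      map_add' := fun g₁ g₂ => by
        simp only [ContinuousMap.add_apply, add_mul]
        exact integral_add (hint g₁) (hint g₂)
      map_smul' := fun c g => by
        simp only [ContinuousMap.smul_apply, smul_eq_mul, mul_assoc, RingHom.id_apply]
        exact integral_const_mul _ _ }
    (∫ x, ‖f x‖ ∂μ) fun g => by
      rw [mul_comm, ← integral_const_mul]
      refine norm_integral_le_of_norm_le (hf.norm.const_mul _) (.of_forall fun x => ?_)
      rw [norm_mul]
      exact mul_le_mul_of_nonneg_right (g.norm_coe_le_norm x) (norm_nonneg _)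

lemma toSubmodule_starAlgebra_adjoin_singleton_eq_span {R A : Type*} [CommSemiring R] [StarRing R]
    [CommSemiring A] [StarRing A] [Algebra R A] [StarModule R A] (a : A) :
    Subalgebra.toSubmodule (StarAlgebra.adjoin R {a}).toSubalgebra =
      Submodule.span R (Set.range fun m : ℕ × ℕ => a ^ m.1 * star a ^ m.2) := by
  rw [StarAlgebra.adjoin_toSubalgebra, Algebra.adjoin_eq_span, Set.star_singleton,
    Set.singleton_union]
  congr 1
  ext f
  simp only [SetLike.mem_coe, Submonoid.mem_closure_pair, Set.mem_range, Prod.exists]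

variable {𝕜 : Type*} [RCLike 𝕜]

lemma dense_span_range_pow_mul_star_pow (K : Set 𝕜) [CompactSpace K] :
    Dense (Submodule.span 𝕜 (Set.range fun m : ℕ × ℕ =>
      Polynomial.toContinuousMapOn Polynomial.X K ^ m.1 *
        star (Polynomial.toContinuousMapOn Polynomial.X K) ^ m.2) : Set C(K, 𝕜)) := by
  have hdense : Dense ((polynomialFunctions K).starClosure : Set C(K, 𝕜)) := by
    rw [dense_iff_closure_eq, ← StarSubalgebra.topologicalClosure_coe,
      polynomialFunctions.starClosure_topologicalClosure, StarSubalgebra.coe_top]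
  rw [← toSubmodule_starAlgebra_adjoin_singleton_eq_span]
  rwa [polynomialFunctions.starClosure_eq_adjoin_X] at hdense

variable [MeasurableSpace 𝕜] [BorelSpace 𝕜]

lemma integral_mul_eq_zero_of_forall_integral_pow_mul_conj_pow_mul_eq_zero {μ : Measure 𝕜}
    {K : Set 𝕜} (hK : IsCompact K) (hμ : ∀ᵐ x ∂μ, x ∈ K) {f : 𝕜 → 𝕜} (hf : Integrable f μ)
    (hmom : ∀ p q : ℕ, ∫ x, x ^ p * starRingEnd 𝕜 x ^ q * f x ∂μ = 0) {g : 𝕜 → 𝕜}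
    (hg : Continuous g) : ∫ x, g x * f x ∂μ = 0 := by
  have : CompactSpace K := isCompact_iff_compactSpace.1 hK
  have hKm : MeasurableSet K := hK.isClosed.measurableSet
  have hrestrict : μ.restrict K = μ := Measure.restrict_eq_self_of_ae_mem hμ
  have hsub : ∀ h : 𝕜 → 𝕜, ∫ x : K, h x ∂μ.comap Subtype.val = ∫ x, h x ∂μ := fun h => by
    rw [integral_subtype_comap hKm, hrestrict]
  have hfK : Integrable (fun x : K => f x) (μ.comap Subtype.val) :=
    (integrableOn_iff_comap_subtypeVal hKm).1 hf.integrableOn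
  have hzero : integralMulCLM hfK = 0 := by
    refine ContinuousLinearMap.ext_on (dense_span_range_pow_mul_star_pow K) ?_
    rintro _ ⟨⟨p, q⟩, rfl⟩
    refine Eq.trans ?_ ((hsub _).trans (hmom p q))
    simp [integralMulCLM]
  rw [← hsub]
  exact DFunLike.congr_fun hzero (⟨fun x => g x, by fun_prop⟩ : C(K, 𝕜))

theorem ae_eq_zero_of_forall_integral_pow_mul_conj_pow_mul_eq_zero {μ : Measure 𝕜} {K : Set 𝕜}
    (hK : IsCompact K) (hμ : ∀ᵐ x ∂μ, x ∈ K) {f : 𝕜 → 𝕜} (hf : Integrable f μ)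
    (hmom : ∀ p q : ℕ, ∫ x, x ^ p * starRingEnd 𝕜 x ^ q * f x ∂μ = 0) : ∀ᵐ x ∂μ, f x = 0 := by
  refine ae_eq_zero_of_integral_contDiff_smul_eq_zero hf.locallyIntegrable fun g hg _ => ?_
  simp only [RCLike.real_smul_eq_coe_mul]
  exact integral_mul_eq_zero_of_forall_integral_pow_mul_conj_pow_mul_eq_zero hK hμ hf hmom
    (RCLike.continuous_ofReal.comp hg.continuous)

end Density

section Complex

variable {v : ℂ → ℝ} {V : ℂ → ℂ}

lemma clm_apply_eq_re_mul_add_im_mul (L : ℂ →L[ℝ] ℝ) (z : ℂ) :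
    L z = z.re * L 1 + z.im * L I := by
  have hz : z = z.re • (1 : ℂ) + z.im • I := by simp
  conv_lhs => rw [hz, map_add, map_smul, map_smul, smul_eq_mul, smul_eq_mul]

lemma isWeakNeumannOn_iff_re_im {Ω : Set ℂ} {μ : Measure ℂ} :
    IsWeakNeumannOn V Ω μ ↔ ∀ ψ : ℂ → ℝ, ContDiff ℝ 1 ψ →
      ∫ x in Ω, ((V x).re * fderiv ℝ ψ x 1 + (V x).im * fderiv ℝ ψ x I) ∂μ = 0 := by
  simp only [IsWeakNeumannOn, ← clm_apply_eq_re_mul_add_im_mul]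

lemma isWeakGradientOn_of_re_im {Ω : Set ℂ} {μ : Measure ℂ} (hv : IntegrableOn v Ω μ)
    (hV : IntegrableOn V Ω μ)
    (hgrad : ∀ φ : ℂ → ℝ, ContDiff ℝ 1 φ → HasCompactSupport φ → tsupport φ ⊆ Ω →
      (∫ x in Ω, v x * fderiv ℝ φ x 1 ∂μ) = -∫ x in Ω, (V x).re * φ x ∂μ ∧
      (∫ x in Ω, v x * fderiv ℝ φ x I ∂μ) = -∫ x in Ω, (V x).im * φ x ∂μ) :
    IsWeakGradientOn v V Ω μ := by
  intro φ hφ hc hs h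
  have hint : ∀ e : ℂ, IntegrableOn (fun x => v x * fderiv ℝ φ x e) Ω μ := fun e =>
    integrable_mul_of_hasCompactSupport hv
      ((hφ.continuous_fderiv (by simp)).clm_apply continuous_const) (hc.fderiv_apply ℝ e)
  have hre : IntegrableOn (fun x => (V x).re * φ x) Ω μ :=
    integrable_mul_of_hasCompactSupport (Integrable.re hV) hφ.continuous hc
  have him : IntegrableOn (fun x => (V x).im * φ x) Ω μ :=
    integrable_mul_of_hasCompactSupport (Integrable.im hV) hφ.continuous hc
  obtain ⟨hone, hI⟩ := hgrad φ hφ hc hs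
  calc ∫ x in Ω, v x * fderiv ℝ φ x h ∂μ
      = ∫ x in Ω, (h.re * (v x * fderiv ℝ φ x 1) + h.im * (v x * fderiv ℝ φ x I)) ∂μ := by
        simp only [clm_apply_eq_re_mul_add_im_mul _ h, mul_add, mul_left_comm]
    _ = -(h.re * ∫ x in Ω, (V x).re * φ x ∂μ + h.im * ∫ x in Ω, (V x).im * φ x ∂μ) := by
        rw [integral_add ((hint 1).const_mul _) ((hint I).const_mul _), integral_const_mul,
          integral_const_mul, hone, hI]
        ring
    _ = -∫ x in Ω, ⟪V x, h⟫_ℝ * φ x ∂μ := by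
        rw [← integral_const_mul, ← integral_const_mul,
          ← integral_add (hre.const_mul _) (him.const_mul _)]
        simp only [Complex.inner, mul_re, conj_re, conj_im]
        congr 2 with x
        ring

theorem IsWeakGradientOn.exists_ae_eq_const (hgrad : IsWeakGradientOn v V (ball 0 1) volume)
    (hneu : IsWeakNeumannOn V (ball 0 1) volume) (hv : IntegrableOn v (ball 0 1))
    (hV : IntegrableOn V (ball 0 1)) :
    ∃ c : ℝ, ∀ᵐ x ∂volume.restrict (ball (0 : ℂ) 1), v x = c := by
  have : IsFiniteMeasure (volume.restrict (ball (0 : ℂ) 1)) := ⟨by simp⟩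
  let c : ℝ := ⨍ x in ball (0 : ℂ) 1, v x
  have hw : IntegrableOn (fun x => v x - c) (ball 0 1) := hv.sub (integrable_const c)
  have hmom := (hgrad.sub_const hv c).integral_smul_conjMonomial_eq_zero hneu hw hV
    (integral_sub_average _ v)
  have hzero := ae_eq_zero_of_forall_integral_pow_mul_conj_pow_mul_eq_zero
    (isCompact_closedBall (0 : ℂ) 1)
    ((ae_restrict_mem measurableSet_ball).mono fun _ hx => ball_subset_closedBall hx)
    (f := fun x => ((v x - c : ℝ) : ℂ)) (Integrable.ofReal hw)
    fun p q => by simpa only [conjMonomial, real_smul, mul_comm (ofReal _)] using hmom p q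
  exact ⟨c, hzero.mono fun x hx => sub_eq_zero.1 (ofReal_eq_zero.1 hx)⟩

lemma ae_inv_conj {P : ℂ → Prop} (hP : ∀ᵐ z : ℂ, P z) : ∀ᵐ z : ℂ, P (starRingEnd ℂ z)⁻¹ := by
  have hdiff : DifferentiableOn ℝ (fun z : ℂ => (starRingEnd ℂ z)⁻¹) ({z | ¬P z} \ {0}) :=
    fun z hz => (conjCLE.differentiableAt.inv (by simpa using hz.2)).differentiableWithinAt
  have himage := addHaar_image_eq_zero_of_differentiableOn_of_addHaar_eq_zero volume hdiff
    (measure_mono_null Set.sdiff_subset hP)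
  have hne : ∀ᵐ z : ℂ, z ≠ 0 := Measure.ae_ne volume 0
  filter_upwards [measure_eq_zero_iff_ae_notMem.1 himage, hne] with z hz hz0
  by_contra hPz
  exact hz ⟨(starRingEnd ℂ z)⁻¹, ⟨hPz, by simpa using hz0⟩, by simp⟩

lemma symReflect_ae_eq_const {c : ℝ} (hc : ∀ᵐ x ∂volume.restrict (ball (0 : ℂ) 1), v x = c) :
    ∀ᵐ x : ℂ, symReflect v x = c := by
  rw [ae_restrict_iff' measurableSet_ball] at hc
  have hsphere : volume (sphere (0 : ℂ) 1) = 0 := Measure.addHaar_sphere _ _ _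
  filter_upwards [hc, ae_inv_conj hc, measure_eq_zero_iff_ae_notMem.1 hsphere]
    with x hin hout hx
  rw [symReflect]
  split_ifs with hball
  · exact hin hball
  · refine hout ?_
    have hx1 : 1 < ‖x‖ := lt_of_le_of_ne (by simpa using hball) (by simpa [eq_comm] using hx)
    simpa using inv_lt_one_of_one_lt₀ hx1

lemma integral_lap_eq_zero {ψ : ℂ → ℝ} (hψ : ContDiff ℝ 2 ψ) (hc : HasCompactSupport ψ) :
    ∫ x, lap ψ x = 0 := by
  have hd : ∀ h : ℂ, ContDiff ℝ 1 fun x => fderiv ℝ ψ x h := fun h =>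
    (hψ.fderiv_right (m := 1) (by norm_num)).clm_apply contDiff_const
  have hint : ∀ h : ℂ, Integrable fun x => fderiv ℝ (fun y => fderiv ℝ ψ y h) x h := fun h =>
    (((hd h).continuous_fderiv (by simp)).clm_apply
      continuous_const).integrable_of_hasCompactSupport ((hc.fderiv_apply ℝ h).fderiv_apply ℝ h)
  simp only [lap]
  rw [integral_add (hint 1) (hint I), integral_fderiv_apply_eq_zero (hd 1) (hc.fderiv_apply ℝ 1),
    integral_fderiv_apply_eq_zero (hd I) (hc.fderiv_apply ℝ I), add_zero]

end Complex

/-- Let `v ∈ W^{1,1}(D)` (with weak gradient `V`) satisfy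
`∫_D ∇v·∇ψ = 0` for all `ψ ∈ C¹(D̄)` (distributional Neumann problem with `f = 0`).
Then the symmetric reflection `v̂` is (weakly) harmonic on `ℝ²` and `v` is constant. -/
theorem stmt_10 (v : ℂ → ℝ) (V : ℂ → ℂ)
    (hv : IntegrableOn v (ball 0 1)) (hV : IntegrableOn V (ball 0 1))
    -- V is the weak gradient of v on D
    (hgrad : ∀ φ : ℂ → ℝ, ContDiff ℝ 1 φ → HasCompactSupport φ → tsupport φ ⊆ ball 0 1 →
      (∫ x in ball (0:ℂ) 1, v x * fderiv ℝ φ x 1)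
        = - ∫ x in ball (0:ℂ) 1, (V x).re * φ x
      ∧ (∫ x in ball (0:ℂ) 1, v x * fderiv ℝ φ x Complex.I)
        = - ∫ x in ball (0:ℂ) 1, (V x).im * φ x)
    -- weak Neumann solution with f = 0: test functions C¹ up to the boundary
    (hsol : ∀ ψ : ℂ → ℝ, ContDiff ℝ 1 ψ →
      (∫ x in ball (0:ℂ) 1,
        ((V x).re * fderiv ℝ ψ x 1 + (V x).im * fderiv ℝ ψ x Complex.I)) = 0) :
    (∀ ψ : ℂ → ℝ, ContDiff ℝ 2 ψ → HasCompactSupport ψ →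
      (∫ x, symReflect v x * lap ψ x) = 0)
    ∧ ∃ c : ℝ, ∀ᵐ x ∂volume.restrict (ball (0:ℂ) 1), v x = c := by
  have hweak := isWeakGradientOn_of_re_im hv hV hgrad
  have hneu := isWeakNeumannOn_iff_re_im.2 hsol
  obtain ⟨c, hc⟩ := hweak.exists_ae_eq_const hneu hv hV
  refine ⟨fun ψ hψ hψc => ?_, c, hc⟩
  calc ∫ x, symReflect v x * lap ψ x = ∫ x, c * lap ψ x :=
        integral_congr_ae <| (symReflect_ae_eq_const hc).mono fun x hx => by simp only [hx]
    _ = 0 := by rw [integral_const_mul, integral_lap_eq_zero hψ hψc, mul_zero]
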